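/- Let (w̃, m̃, H̃) solve the cell problem: for each x ∈ 𝕋^d and Λ ∈ ℝ^d, (1/2)|Λ+∇_y w̃(x,Λ,y)|² + V(x,y) = ln m̃(x,Λ,y) + H̃(x,Λ) and −div_y(m̃(Λ+∇_y w̃)) = 0 in 𝒴^d with ∫_{𝒴^d} m̃ dy = 1, m̃ > 0, where w̃, m̃, H̃ depend smoothly on (x,Λ). If d > 1, assume in addition that V is separable in y, i.e. V(x,y) = Σ_{i=1}^d V_i(x, y_i) for smooth V_i. Then H̃ is uniformly convex in Λ: there exists a constant C > 0, independent of x and Λ, such that for every ξ ∈ ℝ^d, Σ_{j,l} ξ_j (∂²H̃/∂Λ_j∂Λ_l)(x,Λ) ξ_l ≥ C|ξ|². Moreover, there exists a constant C' > 0 such that |∂²H̃/∂Λ_j∂Λ_l (x,Λ)| ≤ C' for all x ∈ 𝕋^d, Λ ∈ ℝ^d, and j,l ∈ {1,…,d}. -/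

import Mathlib

/-!
For a trial function `φ` let `E φ = |Λ + ∇φ|² / 2 + V(x, ·)`. If `(w, m, H)` solves the cell problem
then `exp (E w) = exp H * m`, so `m dy` is a probability measure under which
`E (w + ψ) - E w = (Λ + ∇w) · ∇ψ + |∇ψ|² / 2` has an exponential moment; as `m (Λ + ∇w)` is
divergence free, Jensen's inequality shows that `exp H` is the minimum of `∫ exp (E φ)` over
periodic `φ`. In particular `H` is unique.

Let now `(w', m', H')` solve the problem at `Λ + δ`. Keeping the quadratic term in Jensen's
inequality for `φ = w'` gives `H' ≥ H + l · δ + (inf m / 2) |δ|²`, where `l` is the `m`-average of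
`Λ + ∇w`. Testing the variational formula at `Λ + δ` with `w` and bounding
`∫ exp ((Λ + ∇w) · δ) m` by Hoeffding's lemma gives a reverse inequality whose quadratic coefficient
depends only on the oscillation of `Λ + ∇w`. The second derivatives of `H` are thus controlled by a
lower bound for `m` and by the oscillation of the velocity.

When `V` is separable these are controlled by `sup |V|` alone: a solution is the product of
one-dimensional ones, for which the flux `m (Λ + w')` is a constant `c`, so that `m = exp (-r)` has
velocity `c exp r` and the equation is the pointwise identity `r + c² exp (2 r) / 2 = H - v`.
By uniqueness of `H`, the bounds of this explicit solution apply to the given one.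
-/

open MeasureTheory Filter Topology Function

noncomputable section

/-- The unit cell `𝒴^d = [0,1)^d`. -/
def cube (d : ℕ) : Set (Fin d → ℝ) := Set.univ.pi fun _ => Set.Ico (0 : ℝ) 1

/-- `ℤ^d`-periodicity of a function on `ℝ^d`; functions on the torus `𝕋^d`
(and `𝒴^d`-periodic functions) are identified with such functions. -/
def ZPer {d : ℕ} (f : (Fin d → ℝ) → ℝ) : Prop :=
  ∀ (x : Fin d → ℝ) (k : Fin d → ℤ), f (fun i => x i + (k i : ℝ)) = f x

/-- The `i`-th partial derivative. -/
def pder {d : ℕ} (i : Fin d) (f : (Fin d → ℝ) → ℝ) (x : Fin d → ℝ) : ℝ :=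
  fderiv ℝ f x (Pi.single i 1)

/-- `V : 𝕋^d × ℝ^d → ℝ` smooth, `𝒴^d`-periodic in the second variable
(and periodic in the first, i.e. defined on the torus). -/
def SmoothV {d : ℕ} (V : (Fin d → ℝ) → (Fin d → ℝ) → ℝ) : Prop :=
  ContDiff ℝ (⊤ : ℕ∞) (uncurry V) ∧ (∀ y, ZPer fun x => V x y) ∧ (∀ x, ZPer (V x))

/-- `sup_{(x,y) ∈ 𝕋^d × 𝒴^d} V (x,y)` (by periodicity, the sup over all of `ℝ^d × ℝ^d`). -/
def supV {d : ℕ} (V : (Fin d → ℝ) → (Fin d → ℝ) → ℝ) : ℝ :=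
  ⨆ q : (Fin d → ℝ) × (Fin d → ℝ), V q.1 q.2

/-- `inf_{(x,y) ∈ 𝕋^d × 𝒴^d} V (x,y)`. -/
def infV {d : ℕ} (V : (Fin d → ℝ) → (Fin d → ℝ) → ℝ) : ℝ :=
  ⨅ q : (Fin d → ℝ) × (Fin d → ℝ), V q.1 q.2

/-- `(w, m, H)` is a classical solution of the cell problem at `(x, Λ)`:
`|Λ+∇_y w|²/2 + V(x,y) = ln m + H`, `-div_y(m (Λ+∇_y w)) = 0` in `𝒴^d`, `∫_{𝒴^d} m = 1`. -/
def CellSolAt {d : ℕ} (V : (Fin d → ℝ) → (Fin d → ℝ) → ℝ)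
    (x Λ : Fin d → ℝ) (w m : (Fin d → ℝ) → ℝ) (H : ℝ) : Prop :=
  ContDiff ℝ 2 w ∧ ZPer w ∧ ContDiff ℝ 1 m ∧ ZPer m ∧ (∀ y, 0 < m y) ∧
  (∀ y, (∑ i, (Λ i + pder i w y) ^ 2) / 2 + V x y = Real.log (m y) + H) ∧
  (∀ y, (∑ i, pder i (fun z => m z * (Λ i + pder i w z)) y) = 0) ∧
  (∫ y in cube d, m y) = 1

/-- `V` is separable in `y`: `V(x,y) = Σ_i V_i(x, y_i)` with each `V_i` smooth
(and periodic in the torus variable `x`). -/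
def SeparableV {d : ℕ} (V : (Fin d → ℝ) → (Fin d → ℝ) → ℝ) : Prop :=
  ∃ Vi : Fin d → ((Fin d → ℝ) → ℝ → ℝ),
    (∀ i, ContDiff ℝ (⊤ : ℕ∞) (uncurry (Vi i))) ∧
    (∀ i t, ZPer fun x => Vi i x t) ∧
    ∀ x y, V x y = ∑ i, Vi i x (y i)

section Hessian

variable {E : Type*} [NormedAddCommGroup E] [NormedSpace ℝ E]

lemma deriv_deriv_nonneg_of_isLocalMin {g : ℝ → ℝ} {a : ℝ} (hg : ContinuousAt g a)
    (hmin : IsLocalMin g a) : 0 ≤ deriv (deriv g) a := by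
  by_contra! hneg
  have hmax : IsLocalMax g a := isLocalMax_of_deriv_deriv_neg hneg hmin.deriv_eq_zero hg
  have hconst : g =ᶠ[𝓝 a] fun _ => g a := by
    filter_upwards [hmin, hmax] with t hle hge using le_antisymm hge hle
  simp [hconst.deriv.deriv_eq] at hneg

lemma deriv_deriv_comp_add_smul {f : E → ℝ} (hf : ContDiff ℝ 2 f) (z ξ : E) (t : ℝ) :
    deriv (deriv fun t : ℝ => f (z + t • ξ)) t = fderiv ℝ (fderiv ℝ f) (z + t • ξ) ξ ξ := by
  have hline (t : ℝ) : HasDerivAt (fun t : ℝ => z + t • ξ) ξ t := by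
    simpa using ((hasDerivAt_id t).smul_const ξ).const_add z
  have hf' : Differentiable ℝ (fderiv ℝ f) :=
    (hf.fderiv_right (m := 1) (by norm_num)).differentiable one_ne_zero
  have hderiv : deriv (fun t : ℝ => f (z + t • ξ)) = fun t => fderiv ℝ f (z + t • ξ) ξ :=
    funext fun t => ((hf.differentiable two_ne_zero _).hasFDerivAt.comp_hasDerivAt t
      (hline t)).deriv
  rw [hderiv]
  simpa using (((hf' _).hasFDerivAt.comp_hasDerivAt t (hline t)).clm_apply
    (hasDerivAt_const t ξ)).deriv

lemma two_mul_le_fderiv_fderiv {f : E → ℝ} (hf : ContDiff ℝ 2 f) {z ξ : E} {l a : ℝ}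
    (hle : ∀ᶠ t : ℝ in 𝓝 0, f z + (l * t + a * t ^ 2) ≤ f (z + t • ξ)) :
    2 * a ≤ fderiv ℝ (fderiv ℝ f) z ξ ξ := by
  set g : ℝ → ℝ := fun t => f (z + t • ξ) with hg_def
  have hg : ContDiff ℝ 2 g := by fun_prop
  have hg' : Differentiable ℝ (deriv g) :=
    ((contDiff_succ_iff_deriv (n := 1)).1 hg).2.2.differentiable one_ne_zero
  have hmin : IsLocalMin (fun t => g t - (l * t + a * t ^ 2)) 0 := by
    filter_upwards [hle] with t ht
    simp only [hg_def, zero_smul, add_zero]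
    linarith
  have hderiv : deriv (fun t => g t - (l * t + a * t ^ 2)) =
      fun t => deriv g t - (l + a * (2 * t)) := by
    funext t
    refine ((hg.differentiable two_ne_zero t).hasDerivAt.fun_sub ?_).deriv
    simpa using ((hasDerivAt_id t).const_mul l).fun_add
      (((hasDerivAt_id t).fun_pow 2).const_mul a)
  have hderiv2 : deriv (fun t => deriv g t - (l + a * (2 * t))) 0 = deriv (deriv g) 0 - 2 * a := by
    refine ((hg' 0).hasDerivAt.fun_sub ?_).deriv
    simpa [mul_comm] using (((hasDerivAt_id (0 : ℝ)).const_mul 2).const_mul a).const_add l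
  have hcont : Continuous fun t => g t - (l * t + a * t ^ 2) := hg.continuous.sub (by fun_prop)
  have hnonneg := deriv_deriv_nonneg_of_isLocalMin hcont.continuousAt hmin
  have hline : deriv (deriv g) 0 = fderiv ℝ (fderiv ℝ f) z ξ ξ := by
    simpa using deriv_deriv_comp_add_smul hf z ξ 0
  rw [hderiv, hderiv2, hline] at hnonneg
  linarith

lemma fderiv_fderiv_le_two_mul {f : E → ℝ} (hf : ContDiff ℝ 2 f) {z ξ : E} {l a : ℝ}
    (hle : ∀ᶠ t : ℝ in 𝓝 0, f (z + t • ξ) ≤ f z + (l * t + a * t ^ 2)) :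
    fderiv ℝ (fderiv ℝ f) z ξ ξ ≤ 2 * a := by
  have hneg : fderiv ℝ (fderiv ℝ fun x => -f x) z = -fderiv ℝ (fderiv ℝ f) z := by
    rw [show fderiv ℝ (fun x => -f x) = fun x => -fderiv ℝ f x from funext fun _ => fderiv_fun_neg,
      fderiv_fun_neg]
  have := two_mul_le_fderiv_fderiv (z := z) (ξ := ξ) (l := -l) (a := -a) hf.neg <| by
    filter_upwards [hle] with t ht
    linarith
  simp only [hneg, neg_apply] at this
  linarith

lemma abs_apply_le_half_add_of_nonneg {A : E →L[ℝ] E →L[ℝ] ℝ} (hA : ∀ u, 0 ≤ A u u)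
    (hsymm : ∀ u v, A u v = A v u) (u v : E) : |A u v| ≤ (A u u + A v v) / 2 := by
  have hadd := hA (u + v)
  have hsub := hA (u - v)
  simp only [map_add, map_sub, add_apply, sub_apply,
    hsymm v u] at hadd hsub
  rw [abs_le]
  constructor <;> linarith

end Hessian

section PartialDerivatives

variable {d : ℕ} {f g : (Fin d → ℝ) → ℝ}

lemma continuous_pder (hf : ContDiff ℝ 1 f) (i : Fin d) : Continuous (pder i f) :=
  (hf.continuous_fderiv one_ne_zero).clm_apply continuous_const

lemma contDiff_pder (hf : ContDiff ℝ 2 f) (i : Fin d) : ContDiff ℝ 1 (pder i f) :=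
  (hf.fderiv_right (m := 1) (by norm_num)).clm_apply contDiff_const

lemma pder_add {y : Fin d → ℝ} (hf : DifferentiableAt ℝ f y) (hg : DifferentiableAt ℝ g y)
    (i : Fin d) : pder i (f + g) y = pder i f y + pder i g y := by
  simp [pder, fderiv_add hf hg]

lemma pder_mul {y : Fin d → ℝ} (hf : DifferentiableAt ℝ f y) (hg : DifferentiableAt ℝ g y)
    (i : Fin d) : pder i (f * g) y = f y * pder i g y + g y * pder i f y := by
  simp [pder, fderiv_mul hf hg]

lemma pder_eq_zero_of_forall_add_single {i : Fin d} (hf : Differentiable ℝ f)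
    (h : ∀ (y : Fin d → ℝ) (t : ℝ), f (y + t • Pi.single i 1) = f y) (y : Fin d → ℝ) :
    pder i f y = 0 := by
  rw [pder, ← (hf y).lineDeriv_eq_fderiv, lineDeriv]
  simp only [h, deriv_const]

lemma pder_sum_comp_apply {W W' : Fin d → ℝ → ℝ} (hW : ∀ i t, HasDerivAt (W i) (W' i t) t)
    (i : Fin d) (y : Fin d → ℝ) : pder i (fun y => ∑ j, W j (y j)) y = W' i (y i) := by
  have hsum : HasFDerivAt (fun y : Fin d → ℝ => ∑ j, W j (y j))
      (∑ j, W' j (y j) • ContinuousLinearMap.proj (R := ℝ) (φ := fun _ : Fin d => ℝ) j) y :=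
    HasFDerivAt.fun_sum fun j _ => (hW j (y j)).comp_hasFDerivAt y (hasFDerivAt_apply j y)
  simp [pder, hsum.fderiv, Pi.single_apply]

lemma pder_pder (hf : ContDiff ℝ 2 f) (z : Fin d → ℝ) (j l : Fin d) :
    pder l (pder j f) z = fderiv ℝ (fderiv ℝ f) z (Pi.single l 1) (Pi.single j 1) := by
  have hf' : DifferentiableAt ℝ (fderiv ℝ f) z :=
    (hf.fderiv_right (m := 1) (by norm_num)).differentiable one_ne_zero z
  change fderiv ℝ (fun z => fderiv ℝ f z (Pi.single j 1)) z (Pi.single l 1) = _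
  rw [fderiv_clm_apply hf' (differentiableAt_const _)]
  simp

lemma sum_mul_pder_pder_mul (hf : ContDiff ℝ 2 f) (z ξ : Fin d → ℝ) :
    ∑ j, ∑ l, ξ j * pder l (pder j f) z * ξ l = fderiv ℝ (fderiv ℝ f) z ξ ξ := by
  conv_rhs => rw [pi_eq_sum_univ' ξ]
  simp only [pder_pder hf, map_sum, map_smul, sum_apply,
    smul_apply, smul_eq_mul, Finset.mul_sum]
  exact Finset.sum_congr rfl fun l _ => Finset.sum_congr rfl fun j _ => by ring

lemma abs_pder_pder_le (hf : ContDiff ℝ 2 f) {z : Fin d → ℝ} {A : ℝ}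
    (hnonneg : ∀ ξ, 0 ≤ fderiv ℝ (fderiv ℝ f) z ξ ξ)
    (hle : ∀ ξ, fderiv ℝ (fderiv ℝ f) z ξ ξ ≤ A * ∑ i, ξ i ^ 2) (j l : Fin d) :
    |pder l (pder j f) z| ≤ A := by
  have hdiag (i : Fin d) : fderiv ℝ (fderiv ℝ f) z (Pi.single i 1) (Pi.single i 1) ≤ A := by
    simpa [Pi.single_apply] using hle (Pi.single i 1)
  have hsymm : IsSymmSndFDerivAt ℝ f z := hf.contDiffAt.isSymmSndFDerivAt (by simp)
  rw [pder_pder hf]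
  refine (abs_apply_le_half_add_of_nonneg hnonneg hsymm.eq _ _).trans ?_
  linarith [hdiag j, hdiag l]

end PartialDerivatives

section Periodic

variable {d : ℕ}

namespace ZPer

variable {f g : (Fin d → ℝ) → ℝ}

lemma const_add (hf : ZPer f) (a : ℝ) : ZPer fun y => a + f y :=
  fun x k => congrArg (a + ·) (hf x k)

lemma sub (hf : ZPer f) (hg : ZPer g) : ZPer (f - g) :=
  fun x k => congrArg₂ (· - ·) (hf x k) (hg x k)

lemma mul (hf : ZPer f) (hg : ZPer g) : ZPer (f * g) :=
  fun x k => congrArg₂ (· * ·) (hf x k) (hg x k)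

lemma pder (hf : ZPer f) (i : Fin d) : ZPer (pder i f) := by
  intro x k
  have hshift : f = fun z => f (z + fun i => (k i : ℝ)) := funext fun z => (hf z k).symm
  rw [_root_.pder, _root_.pder]
  conv_rhs => rw [hshift, fderiv_comp_add_right]
  rfl

lemma apply_fract (hf : ZPer f) (x : Fin d → ℝ) : f (fun i => Int.fract (x i)) = f x := by
  simpa [← sub_eq_add_neg] using hf x fun i => -⌊x i⌋

lemma update_add_one (hf : ZPer f) (x : Fin d → ℝ) (i : Fin d) :
    f (Function.update x i (x i + 1)) = f x := by
  rw [← hf x (Pi.single i 1)]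
  congr 1
  ext j
  obtain rfl | hj := eq_or_ne j i <;> simp [*]

end ZPer

lemma SmoothV.exists_abs_le {V : (Fin d → ℝ) → (Fin d → ℝ) → ℝ} (hV : SmoothV V) :
    ∃ B, ∀ x y, |V x y| ≤ B := by
  obtain ⟨hsmooth, hperx, hpery⟩ := hV
  obtain ⟨B, hB⟩ := (isCompact_Icc (a := (0 : Fin d → ℝ)) (b := 1)).prod
    (isCompact_Icc (a := (0 : Fin d → ℝ)) (b := 1)) |>.exists_bound_of_continuousOn
    hsmooth.continuous.continuousOn
  have hfract (x : Fin d → ℝ) : (fun i => Int.fract (x i)) ∈ Set.Icc (0 : Fin d → ℝ) 1 :=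
    ⟨fun i => Int.fract_nonneg _, fun i => (Int.fract_lt_one _).le⟩
  refine ⟨B, fun x y => ?_⟩
  rw [← (hpery x).apply_fract y, ← (hperx _).apply_fract x]
  exact hB (_, _) ⟨hfract x, hfract y⟩

end Periodic

section UnitCube

variable {d : ℕ}

lemma cube_ae_eq_Icc (d : ℕ) : cube d =ᵐ[volume] Set.Icc (0 : Fin d → ℝ) 1 := by
  simpa [cube, volume_pi] using
    Measure.univ_pi_Ico_ae_eq_Icc (μ := fun _ : Fin d => (volume : Measure ℝ)) (f := 0) (g := 1)

instance isProbabilityMeasure_restrict_cube (d : ℕ) :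
    IsProbabilityMeasure (volume.restrict (cube d)) :=
  ⟨by simp [cube, volume_pi_pi]⟩

lemma integrableOn_cube {f : (Fin d → ℝ) → ℝ} (hf : Continuous f) : IntegrableOn f (cube d) :=
  (hf.continuousOn.integrableOn_compact isCompact_Icc).congr_set_ae (cube_ae_eq_Icc d)

lemma integral_cube_prod (g : Fin d → ℝ → ℝ) :
    ∫ y in cube d, ∏ i, g i (y i) = ∏ i, ∫ t in (0 : ℝ)..1, g i t := by
  rw [cube, volume_pi, Measure.restrict_pi_pi, integral_fintype_prod_eq_prod]
  simp only [integral_Ico_eq_integral_Ioc, intervalIntegral.integral_of_le zero_le_one]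

lemma integral_cube_pder_eq_zero {F : (Fin d → ℝ) → ℝ} (hF : ContDiff ℝ 1 F) (hper : ZPer F)
    (i : Fin d) : ∫ y in cube d, pder i F y = 0 := by
  obtain _ | n := d
  · exact i.elim0
  have hdiv := integral_divergence_of_hasFDerivAt_off_countable' (n := n) (E := ℝ) 0 1 zero_le_one
    (fun j y => if j = i then F y else 0) (fun j y => if j = i then fderiv ℝ F y else 0) ∅
    Set.countable_empty
    (fun j => by split_ifs <;> [exact hF.continuous.continuousOn; exact continuousOn_const])
    (fun y _ j => by
      split_ifs
      · exact (hF.differentiable one_ne_zero y).hasFDerivAt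
      · exact hasFDerivAt_const 0 y)
  have hsum (y : Fin (n + 1) → ℝ) :
      ∑ j, (if j = i then fderiv ℝ F y else 0) (Pi.single j 1) = pder i F y := by
    rw [Finset.sum_eq_single i (by simp +contextual) (by simp)]
    simp [pder]
  have hface (z : Fin n → ℝ) :
      F (i.insertNth ((1 : Fin (n + 1) → ℝ) i) z) =
        F (i.insertNth ((0 : Fin (n + 1) → ℝ) i) z) := by
    simpa using hper.update_add_one (i.insertNth 0 z) i
  rw [setIntegral_congr_set (cube_ae_eq_Icc _)]
  simp only [hsum] at hdiv
  rw [hdiv ((continuous_pder hF i).continuousOn.integrableOn_compact isCompact_Icc),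
    Finset.sum_eq_single i (by simp +contextual) (by simp)]
  simp only [if_true, hface, sub_self]

lemma sq_le_integral_cube_add_pder_sq {ψ : (Fin d → ℝ) → ℝ} (hψ : ContDiff ℝ 1 ψ) (hper : ZPer ψ)
    (a : ℝ) (i : Fin d) : a ^ 2 ≤ ∫ y in cube d, (a + pder i ψ y) ^ 2 := by
  have hcont := continuous_pder hψ i
  calc a ^ 2 = ∫ y in cube d, (a ^ 2 + 2 * a * pder i ψ y) := by
        rw [integral_add (integrable_const _) (integrableOn_cube (by fun_prop)),
          integral_const_mul, integral_cube_pder_eq_zero hψ hper]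
        simp
    _ ≤ ∫ y in cube d, (a + pder i ψ y) ^ 2 :=
        integral_mono (integrableOn_cube (by fun_prop)) (integrableOn_cube (by fun_prop))
          fun y => by linarith [sq_nonneg (pder i ψ y), add_sq a (pder i ψ y)]

end UnitCube

section Jensen

variable {Ω : Type*} [MeasurableSpace Ω] {μ : Measure Ω} [IsProbabilityMeasure μ] {X : Ω → ℝ}

lemma exp_integral_le_integral_exp (hX : Integrable X μ)
    (hexp : Integrable (fun ω => Real.exp (X ω)) μ) :
    Real.exp (∫ ω, X ω ∂μ) ≤ ∫ ω, Real.exp (X ω) ∂μ :=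
  convexOn_exp.map_integral_le Real.continuous_exp.continuousOn isClosed_univ (by simp) hX hexp

lemma integral_exp_le_of_abs_sub_le {a ρ : ℝ} (hm : AEMeasurable X μ)
    (hX : ∀ ω, |X ω - a| ≤ ρ) :
    ∫ ω, Real.exp (X ω) ∂μ ≤ Real.exp (∫ ω, X ω ∂μ + ρ ^ 2 / 2) := by
  have hsub := ProbabilityTheory.hasSubgaussianMGF_of_mem_Icc (a := a - ρ) (b := a + ρ) hm <|
    ae_of_all _ fun ω => by
      rw [Set.mem_Icc]
      constructor <;> linarith [abs_le.1 (hX ω)]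
  have hparam : (((‖a + ρ - (a - ρ)‖₊ / 2) ^ 2 : NNReal) : ℝ) = ρ ^ 2 := by
    rw [show a + ρ - (a - ρ) = 2 * ρ by ring]
    simp
  have hmgf := hsub.mgf_le 1
  simp only [ProbabilityTheory.mgf, one_mul, one_pow, mul_one, Real.exp_sub, integral_div,
    hparam] at hmgf
  rwa [div_le_iff₀ (Real.exp_pos _), ← Real.exp_add, add_comm] at hmgf

end Jensen

section Variational

variable {d : ℕ} {V : (Fin d → ℝ) → (Fin d → ℝ) → ℝ} {x Λ Λ' δ : Fin d → ℝ}
  {w m w' m' φ ψ : (Fin d → ℝ) → ℝ} {H H' : ℝ}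

/-- The velocity field `Λ + ∇φ` of a trial function `φ`. -/
def velocity (Λ : Fin d → ℝ) (φ : (Fin d → ℝ) → ℝ) (i : Fin d) (y : Fin d → ℝ) : ℝ :=
  Λ i + pder i φ y

/-- The energy `|Λ + ∇φ|² / 2 + V(x, ·)` of a trial function `φ`; for a solution of the cell
problem it equals `ln m + H`. -/
def cellEnergy (V : (Fin d → ℝ) → (Fin d → ℝ) → ℝ) (x Λ : Fin d → ℝ) (φ : (Fin d → ℝ) → ℝ)
    (y : Fin d → ℝ) : ℝ :=
  (∑ i, velocity Λ φ i y ^ 2) / 2 + V x y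

/-- The measure on the unit cell with density `m`. -/
def cellMeasure (m : (Fin d → ℝ) → ℝ) : Measure (Fin d → ℝ) :=
  (volume.restrict (cube d)).withDensity fun y => ENNReal.ofReal (m y)

/-- The average over the unit cell of the velocity `Λ + ∇w`, weighted by the density `m`. For a
solution of the cell problem it is the gradient of `H` in `Λ`. -/
def meanVelocity (Λ : Fin d → ℝ) (w m : (Fin d → ℝ) → ℝ) (i : Fin d) : ℝ :=
  ∫ y, velocity Λ w i y ∂cellMeasure m

lemma continuous_velocity (hφ : ContDiff ℝ 1 φ) (i : Fin d) : Continuous (velocity Λ φ i) :=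
  continuous_const.add (continuous_pder hφ i)

lemma velocity_add (hφ : ContDiff ℝ 1 φ) (hψ : ContDiff ℝ 1 ψ) (i : Fin d) (y : Fin d → ℝ) :
    velocity (Λ + δ) (φ + ψ) i y = velocity Λ φ i y + velocity δ ψ i y := by
  simp only [velocity, Pi.add_apply,
    pder_add (hφ.differentiable one_ne_zero y) (hψ.differentiable one_ne_zero y)]
  ring

lemma cellEnergy_add (hφ : ContDiff ℝ 1 φ) (hψ : ContDiff ℝ 1 ψ) (y : Fin d → ℝ) :
    cellEnergy V x (Λ + δ) (φ + ψ) y = cellEnergy V x Λ φ y +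
      (∑ i, velocity Λ φ i y * velocity δ ψ i y + (∑ i, velocity δ ψ i y ^ 2) / 2) := by
  simp only [cellEnergy, velocity_add hφ hψ, add_sq, Finset.sum_add_distrib, mul_assoc,
    ← Finset.mul_sum]
  ring

namespace CellSolAt

lemma contDiff (h : CellSolAt V x Λ w m H) : ContDiff ℝ 2 w := h.1

lemma contDiff_one (h : CellSolAt V x Λ w m H) : ContDiff ℝ 1 w := h.contDiff.of_le one_le_two

lemma zper (h : CellSolAt V x Λ w m H) : ZPer w := h.2.1

lemma contDiff_density (h : CellSolAt V x Λ w m H) : ContDiff ℝ 1 m := h.2.2.1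

lemma zper_density (h : CellSolAt V x Λ w m H) : ZPer m := h.2.2.2.1

lemma density_pos (h : CellSolAt V x Λ w m H) (y : Fin d → ℝ) : 0 < m y := h.2.2.2.2.1 y

lemma cellEnergy_eq (h : CellSolAt V x Λ w m H) (y : Fin d → ℝ) :
    cellEnergy V x Λ w y = Real.log (m y) + H := h.2.2.2.2.2.1 y

lemma sum_pder_flux (h : CellSolAt V x Λ w m H) (y : Fin d → ℝ) :
    ∑ i, pder i (m * velocity Λ w i) y = 0 := h.2.2.2.2.2.2.1 y

lemma integral_density (h : CellSolAt V x Λ w m H) : ∫ y in cube d, m y = 1 :=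
  h.2.2.2.2.2.2.2

lemma exp_cellEnergy (h : CellSolAt V x Λ w m H) (y : Fin d → ℝ) :
    Real.exp (cellEnergy V x Λ w y) = Real.exp H * m y := by
  rw [h.cellEnergy_eq, Real.exp_add, Real.exp_log (h.density_pos y), mul_comm]

lemma integral_exp_cellEnergy (h : CellSolAt V x Λ w m H) :
    ∫ y in cube d, Real.exp (cellEnergy V x Λ w y) = Real.exp H := by
  simp only [h.exp_cellEnergy, integral_const_mul, h.integral_density, mul_one]

lemma contDiff_velocity (h : CellSolAt V x Λ w m H) (i : Fin d) :
    ContDiff ℝ 1 (velocity Λ w i) :=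
  contDiff_const.add (contDiff_pder h.contDiff i)

lemma zper_velocity (h : CellSolAt V x Λ w m H) (i : Fin d) : ZPer (velocity Λ w i) :=
  (h.zper.pder i).const_add (Λ i)

lemma potential_eq (h : CellSolAt V x Λ w m H) :
    V x = fun y => Real.log (m y) + H - (∑ i, velocity Λ w i y ^ 2) / 2 :=
  funext fun y => by rw [← h.cellEnergy_eq, cellEnergy, add_sub_cancel_left]

lemma contDiff_potential (h : CellSolAt V x Λ w m H) : ContDiff ℝ 1 (V x) := by
  have hvel := h.contDiff_velocity
  rw [h.potential_eq]
  exact ((h.contDiff_density.log fun y => (h.density_pos y).ne').add contDiff_const).sub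
    ((ContDiff.sum fun i _ => (hvel i).pow 2).div_const 2)

lemma zper_potential (h : CellSolAt V x Λ w m H) : ZPer (V x) := by
  intro y k
  simp only [h.potential_eq, h.zper_density y k, h.zper_velocity _ y k]

lemma integral_cellMeasure (h : CellSolAt V x Λ w m H) (g : (Fin d → ℝ) → ℝ) :
    ∫ y, g y ∂cellMeasure m = ∫ y in cube d, m y * g y := by
  rw [cellMeasure, integral_withDensity_eq_integral_toReal_smul
    h.contDiff_density.continuous.measurable.ennreal_ofReal (by simp)]
  simp only [ENNReal.toReal_ofReal (h.density_pos _).le, smul_eq_mul]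

lemma integrable_cellMeasure (h : CellSolAt V x Λ w m H) {g : (Fin d → ℝ) → ℝ}
    (hg : Continuous g) : Integrable g (cellMeasure m) := by
  rw [cellMeasure, integrable_withDensity_iff_integrable_smul'
    h.contDiff_density.continuous.measurable.ennreal_ofReal (by simp)]
  simp only [ENNReal.toReal_ofReal (h.density_pos _).le]
  exact integrableOn_cube (h.contDiff_density.continuous.smul hg)

lemma isProbabilityMeasure_cellMeasure (h : CellSolAt V x Λ w m H) :
    IsProbabilityMeasure (cellMeasure m) := by
  constructor
  rw [cellMeasure, withDensity_apply _ MeasurableSet.univ, Measure.restrict_univ,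
    ← ofReal_integral_eq_lintegral_ofReal (integrableOn_cube h.contDiff_density.continuous)
      (ae_of_all _ fun y => (h.density_pos y).le), h.integral_density, ENNReal.ofReal_one]

lemma integral_sum_velocity_mul_pder (h : CellSolAt V x Λ w m H) (hψ : ContDiff ℝ 1 ψ)
    (hper : ZPer ψ) : ∫ y, ∑ i, velocity Λ w i y * pder i ψ y ∂cellMeasure m = 0 := by
  have hflux (i : Fin d) : ContDiff ℝ 1 (m * velocity Λ w i) :=
    h.contDiff_density.mul (h.contDiff_velocity i)
  have hF (i : Fin d) := (hflux i).mul hψ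
  have hterm (i : Fin d) (y : Fin d → ℝ) : pder i (m * velocity Λ w i * ψ) y =
      m y * (velocity Λ w i y * pder i ψ y) + ψ y * pder i (m * velocity Λ w i) y := by
    rw [pder_mul ((hflux i).differentiable one_ne_zero y) (hψ.differentiable one_ne_zero y),
      Pi.mul_apply, mul_assoc]
  calc ∫ y, ∑ i, velocity Λ w i y * pder i ψ y ∂cellMeasure m
      = ∫ y in cube d, ∑ i, pder i (m * velocity Λ w i * ψ) y := by
        simp only [h.integral_cellMeasure, hterm, Finset.sum_add_distrib, ← Finset.mul_sum,
          h.sum_pder_flux, mul_zero, add_zero]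
    _ = ∑ i, ∫ y in cube d, pder i (m * velocity Λ w i * ψ) y :=
        integral_finsetSum _ fun i _ => integrableOn_cube (continuous_pder (hF i) i)
    _ = 0 := Finset.sum_eq_zero fun i _ => integral_cube_pder_eq_zero (hF i)
        ((h.zper_density.mul (h.zper_velocity i)).mul hper) i

lemma integral_sum_velocity_mul_velocity (h : CellSolAt V x Λ w m H) (hψ : ContDiff ℝ 1 ψ)
    (hper : ZPer ψ) (δ : Fin d → ℝ) :
    ∫ y, ∑ i, velocity Λ w i y * velocity δ ψ i y ∂cellMeasure m =
      ∑ i, meanVelocity Λ w m i * δ i := by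
  have hvel (i : Fin d) := continuous_velocity (Λ := Λ) h.contDiff_one i
  have hpder (i : Fin d) := continuous_pder hψ i
  simp only [velocity.eq_1 δ, mul_add, Finset.sum_add_distrib]
  rw [integral_add (h.integrable_cellMeasure (by fun_prop))
      (h.integrable_cellMeasure (by fun_prop)), h.integral_sum_velocity_mul_pder hψ hper, add_zero,
    integral_finsetSum _ fun i _ => (h.integrable_cellMeasure (hvel i)).mul_const _]
  simp only [integral_mul_const, meanVelocity]

lemma mul_sum_sq_le_integral_cellMeasure (h : CellSolAt V x Λ w m H) {κ : ℝ} (hκ : 0 ≤ κ)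
    (hκm : ∀ y, κ ≤ m y) (hψ : ContDiff ℝ 1 ψ) (hper : ZPer ψ) (δ : Fin d → ℝ) :
    κ * ∑ i, δ i ^ 2 ≤ ∫ y, ∑ i, velocity δ ψ i y ^ 2 ∂cellMeasure m := by
  have hvel (i : Fin d) := continuous_velocity (Λ := δ) hψ i
  have hm := h.contDiff_density.continuous
  calc κ * ∑ i, δ i ^ 2 ≤ κ * ∑ i, ∫ y in cube d, velocity δ ψ i y ^ 2 := by
        gcongr with i
        exact sq_le_integral_cube_add_pder_sq hψ hper (δ i) i
    _ = ∫ y in cube d, κ * ∑ i, velocity δ ψ i y ^ 2 := by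
        rw [integral_const_mul, integral_finsetSum]
        exact fun i _ => integrableOn_cube ((hvel i).pow 2)
    _ ≤ ∫ y in cube d, m y * ∑ i, velocity δ ψ i y ^ 2 := by
        refine integral_mono (integrableOn_cube (by fun_prop)) (integrableOn_cube (by fun_prop))
          fun y => ?_
        exact mul_le_mul_of_nonneg_right (hκm y) (by positivity)
    _ = ∫ y, ∑ i, velocity δ ψ i y ^ 2 ∂cellMeasure m := (h.integral_cellMeasure _).symm

lemma integral_exp_cellEnergy_add (h : CellSolAt V x Λ w m H) (hψ : ContDiff ℝ 1 ψ)
    (δ : Fin d → ℝ) :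
    ∫ y in cube d, Real.exp (cellEnergy V x (Λ + δ) (w + ψ) y) =
      Real.exp H * ∫ y, Real.exp (∑ i, velocity Λ w i y * velocity δ ψ i y +
        (∑ i, velocity δ ψ i y ^ 2) / 2) ∂cellMeasure m := by
  simp only [h.integral_cellMeasure, ← integral_const_mul, cellEnergy_add h.contDiff_one hψ,
    Real.exp_add (cellEnergy _ _ _ _ _), h.exp_cellEnergy, mul_assoc]

lemma exp_add_le_integral_exp_cellEnergy (h : CellSolAt V x Λ w m H) {κ : ℝ} (hκ : 0 ≤ κ)
    (hκm : ∀ y, κ ≤ m y) (hφ : ContDiff ℝ 1 φ) (hper : ZPer φ) (δ : Fin d → ℝ) :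
    Real.exp (H + (∑ i, meanVelocity Λ w m i * δ i + κ / 2 * ∑ i, δ i ^ 2)) ≤
      ∫ y in cube d, Real.exp (cellEnergy V x (Λ + δ) φ y) := by
  obtain ⟨ψ, rfl⟩ : ∃ ψ, φ = w + ψ := ⟨φ - w, by ring⟩
  have hψ : ContDiff ℝ 1 ψ := by simpa using hφ.sub h.contDiff_one
  have hψper : ZPer ψ := by simpa using hper.sub h.zper
  have hvel (i : Fin d) := continuous_velocity (Λ := Λ) h.contDiff_one i
  have hvel' (i : Fin d) := continuous_velocity (Λ := δ) hψ i
  have := h.isProbabilityMeasure_cellMeasure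
  rw [h.integral_exp_cellEnergy_add hψ, Real.exp_add]
  gcongr
  refine le_trans ?_ (exp_integral_le_integral_exp (h.integrable_cellMeasure (by fun_prop))
    (h.integrable_cellMeasure (by fun_prop)))
  rw [Real.exp_le_exp, integral_add (h.integrable_cellMeasure (by fun_prop))
    (h.integrable_cellMeasure (by fun_prop)), integral_div,
    h.integral_sum_velocity_mul_velocity hψ hψper]
  linarith [h.mul_sum_sq_le_integral_cellMeasure hκ hκm hψ hψper δ]

lemma exp_le_integral_exp_cellEnergy (h : CellSolAt V x Λ w m H) (hφ : ContDiff ℝ 1 φ)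
    (hper : ZPer φ) : Real.exp H ≤ ∫ y in cube d, Real.exp (cellEnergy V x Λ φ y) := by
  simpa using h.exp_add_le_integral_exp_cellEnergy le_rfl (fun y => (h.density_pos y).le) hφ hper 0

lemma effectiveHamiltonian_unique (h : CellSolAt V x Λ w m H) (h' : CellSolAt V x Λ w' m' H') :
    H = H' := by
  refine le_antisymm ?_ ?_ <;> rw [← Real.exp_le_exp]
  · exact (h.exp_le_integral_exp_cellEnergy h'.contDiff_one h'.zper).trans_eq
      h'.integral_exp_cellEnergy
  · exact (h'.exp_le_integral_exp_cellEnergy h.contDiff_one h.zper).trans_eq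
      h.integral_exp_cellEnergy

lemma add_quadratic_le_effectiveHamiltonian (h : CellSolAt V x Λ w m H)
    (h' : CellSolAt V x (Λ + δ) w' m' H') {κ : ℝ} (hκ : 0 ≤ κ) (hκm : ∀ y, κ ≤ m y) :
    H + (∑ i, meanVelocity Λ w m i * δ i + κ / 2 * ∑ i, δ i ^ 2) ≤ H' := by
  rw [← Real.exp_le_exp, ← h'.integral_exp_cellEnergy]
  exact h.exp_add_le_integral_exp_cellEnergy hκ hκm h'.contDiff_one h'.zper δ

lemma effectiveHamiltonian_le_add_quadratic (h : CellSolAt V x Λ w m H)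
    (h' : CellSolAt V x (Λ + δ) w' m' H') {c : Fin d → ℝ} {b : ℝ}
    (hb : ∀ y i, (velocity Λ w i y - c i) ^ 2 ≤ b) :
    H' ≤ H + (∑ i, meanVelocity Λ w m i * δ i + (1 + d * b) / 2 * ∑ i, δ i ^ 2) := by
  set S := ∑ i, δ i ^ 2
  have hvel (i : Fin d) := continuous_velocity (Λ := Λ) h.contDiff_one i
  have hsum (y : Fin d → ℝ) : ∑ i, (velocity Λ w i y - c i) ^ 2 ≤ d * b :=
    (Finset.sum_le_card_nsmul _ _ b fun i _ => hb y i).trans_eq (by simp)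
  have hdb : 0 ≤ d * b := (Finset.sum_nonneg fun i _ => sq_nonneg _).trans (hsum 0)
  have hdev (y : Fin d → ℝ) :
      |∑ i, velocity Λ w i y * δ i - ∑ i, c i * δ i| ≤ √(d * b * S) := by
    simp only [← Finset.sum_sub_distrib, ← sub_mul]
    refine Real.abs_le_sqrt ((Finset.sum_mul_sq_le_sq_mul_sq _ _ _).trans ?_)
    gcongr
    exact hsum y
  have := h.isProbabilityMeasure_cellMeasure
  have hmgf := integral_exp_le_of_abs_sub_le (μ := cellMeasure m)
    (h.integrable_cellMeasure (by fun_prop)).aemeasurable hdev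
  have hmean := h.integral_sum_velocity_mul_velocity (ψ := 0) contDiff_const (fun _ _ => rfl) δ
  have hvelδ (i : Fin d) (y : Fin d → ℝ) : velocity δ 0 i y = δ i := by simp [velocity, pder]
  simp only [hvelδ] at hmean
  rw [← Real.exp_le_exp]
  calc Real.exp H' ≤ ∫ y in cube d, Real.exp (cellEnergy V x (Λ + δ) (w + 0) y) := by
        rw [add_zero]
        exact h'.exp_le_integral_exp_cellEnergy h.contDiff_one h.zper
    _ = Real.exp (H + S / 2) * ∫ y, Real.exp (∑ i, velocity Λ w i y * δ i) ∂cellMeasure m := by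
        rw [h.integral_exp_cellEnergy_add (ψ := 0) contDiff_const]
        simp only [hvelδ, Real.exp_add, integral_mul_const]
        ring
    _ ≤ Real.exp (H + S / 2) * Real.exp (∑ i, meanVelocity Λ w m i * δ i + d * b * S / 2) := by
        gcongr
        rwa [hmean, Real.sq_sqrt (by positivity)] at hmgf
    _ = _ := by
        rw [← Real.exp_add]
        ring_nf

end CellSolAt

end Variational

section OneDimensional

lemma continuous_of_strictMono_of_apply_eq {X α β : Type*} [TopologicalSpace X]
    [LinearOrder α] [TopologicalSpace α] [OrderTopology α]
    [LinearOrder β] [TopologicalSpace β] [OrderClosedTopology β] {K : X → α → β} {g : X → β}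
    {h : X → α} (hK : ∀ a, Continuous fun x => K x a) (hmono : ∀ x, StrictMono (K x))
    (hg : Continuous g) (heq : ∀ x, K x (h x) = g x) : Continuous h := by
  refine continuous_iff_continuousAt.2 fun x => tendsto_order.2 ⟨fun a ha => ?_, fun a ha => ?_⟩
  · have hlt : K x a < g x := heq x ▸ hmono x ha
    filter_upwards [(hK a).continuousAt.eventually_lt hg.continuousAt hlt] with x' hx'
    exact (hmono x').lt_iff_lt.1 (heq x' ▸ hx')
  · have hlt : g x < K x a := heq x ▸ hmono x ha
    filter_upwards [hg.continuousAt.eventually_lt (hK a).continuousAt hlt] with x' hx'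
    exact (hmono x').lt_iff_lt.1 (heq x' ▸ hx')

/-- In dimension one the flux `m (Λ + w')` is a constant `c`, so a density `exp (-r)` has velocity
`c * exp r` and the cell problem with potential `v` reads `fluxEnergy c (r t) = H - v t`. -/
def fluxEnergy (c r : ℝ) : ℝ := r + c ^ 2 / 2 * Real.exp (2 * r)

lemma fluxEnergy_eq_add_sq (c r : ℝ) : fluxEnergy c r = r + (c * Real.exp r) ^ 2 / 2 := by
  rw [fluxEnergy, mul_comm 2 r, Real.exp_mul, Real.rpow_two]
  ring

lemma hasDerivAt_fluxEnergy (c r : ℝ) :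
    HasDerivAt (fluxEnergy c) (1 + c ^ 2 * Real.exp (2 * r)) r := by
  refine ((hasDerivAt_id r).add
    (((hasDerivAt_id r).const_mul 2).exp.const_mul (c ^ 2 / 2))).congr_deriv ?_
  simp only [id_eq]
  ring

lemma contDiff_fluxEnergy (c : ℝ) : ContDiff ℝ 1 (fluxEnergy c) := by
  unfold fluxEnergy
  fun_prop

lemma strictMono_fluxEnergy (c : ℝ) : StrictMono (fluxEnergy c) :=
  strictMono_of_hasDerivAt_pos (hasDerivAt_fluxEnergy c) fun r => by positivity

lemma surjective_fluxEnergy (c : ℝ) : Surjective (fluxEnergy c) := by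
  refine (contDiff_fluxEnergy c).continuous.surjective ?_ ?_
  · exact tendsto_atTop_mono (fun r => le_add_of_nonneg_right (by positivity)) tendsto_id
  · refine Tendsto.atBot_add tendsto_id (C := 0) ?_
    simpa using (Real.tendsto_exp_atBot.comp
      (tendsto_id.const_mul_atBot two_pos)).const_mul (c ^ 2 / 2)

/-- `fluxEnergy c` as an order automorphism of `ℝ`, whose inverse solves the cell problem in
dimension one pointwise. -/
def fluxEnergyIso (c : ℝ) : ℝ ≃o ℝ :=
  (strictMono_fluxEnergy c).orderIsoOfSurjective _ (surjective_fluxEnergy c)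

lemma fluxEnergy_fluxEnergyIso_symm (c s : ℝ) : fluxEnergy c ((fluxEnergyIso c).symm s) = s :=
  (fluxEnergyIso c).apply_symm_apply s

lemma continuous_fluxEnergyIso_symm : Continuous fun q : ℝ × ℝ => (fluxEnergyIso q.1).symm q.2 :=
  continuous_of_strictMono_of_apply_eq (K := fun q => fluxEnergy q.1)
    (fun a => by unfold fluxEnergy; fun_prop) (fun q => strictMono_fluxEnergy q.1) continuous_snd
    fun q => fluxEnergy_fluxEnergyIso_symm q.1 q.2

lemma contDiff_fluxEnergyIso_symm (c : ℝ) : ContDiff ℝ 1 (fluxEnergyIso c).symm :=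
  (fluxEnergyIso c).toHomeomorph.contDiff_symm_deriv (fun r => by positivity)
    (hasDerivAt_fluxEnergy c) (contDiff_fluxEnergy c)

lemma abs_le_of_fluxEnergy_eq {c r s : ℝ} (h : fluxEnergy c r = c ^ 2 / 2 + s) : |r| ≤ |s| := by
  have hs : s = r + c ^ 2 / 2 * (Real.exp (2 * r) - 1) := by
    rw [fluxEnergy] at h
    linarith
  obtain hr | hr := le_total 0 r
  · have : 0 ≤ c ^ 2 / 2 * (Real.exp (2 * r) - 1) :=
      mul_nonneg (by positivity) (sub_nonneg.2 (Real.one_le_exp (by linarith)))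
    exact abs_le_abs_of_nonneg hr (by linarith)
  · have : c ^ 2 / 2 * (Real.exp (2 * r) - 1) ≤ 0 :=
      mul_nonpos_of_nonneg_of_nonpos (by positivity)
        (sub_nonpos.2 (Real.exp_le_one_iff.2 (by linarith)))
    exact abs_le_abs_of_nonpos hr (by linarith)

lemma sq_mul_exp_sub_le_of_fluxEnergy_eq {c r s : ℝ} (h : fluxEnergy c r = c ^ 2 / 2 + s) :
    (c * Real.exp r - c) ^ 2 ≤ 2 * |s| := by
  have hs : 2 * s = 2 * r + c ^ 2 * (Real.exp r ^ 2 - 1) := by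
    rw [fluxEnergy_eq_add_sq] at h
    linarith
  obtain hr | hr := le_total 0 r
  · have : 0 ≤ c ^ 2 * (Real.exp r - 1) :=
      mul_nonneg (sq_nonneg c) (sub_nonneg.2 (Real.one_le_exp hr))
    linarith [le_abs_self s]
  · have : 0 ≤ c ^ 2 * (Real.exp r * (1 - Real.exp r)) :=
      mul_nonneg (sq_nonneg c)
        (mul_nonneg (Real.exp_pos r).le (sub_nonneg.2 (Real.exp_le_one_iff.2 hr)))
    linarith [neg_abs_le s]

variable {v : ℝ → ℝ} {c H M : ℝ}

/-- The negative logarithm of the density of flux `c` which solves the cell equation with potential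
`v` and effective Hamiltonian `H`. -/
def negLogDensity (v : ℝ → ℝ) (c H t : ℝ) : ℝ := (fluxEnergyIso c).symm (H - v t)

/-- The mass of the density of flux `c` and effective Hamiltonian `H` over a unit cell. -/
def cellMass (v : ℝ → ℝ) (c H : ℝ) : ℝ := ∫ t in (0 : ℝ)..1, Real.exp (-negLogDensity v c H t)

lemma fluxEnergy_negLogDensity (v : ℝ → ℝ) (c H t : ℝ) :
    fluxEnergy c (negLogDensity v c H t) = H - v t :=
  fluxEnergy_fluxEnergyIso_symm c _

lemma negLogDensity_mono {s t H' : ℝ} (h : H - v s ≤ H' - v t) :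
    negLogDensity v c H s ≤ negLogDensity v c H' t :=
  (fluxEnergyIso c).symm.monotone h

@[fun_prop]
lemma continuous_negLogDensity {X : Type*} [TopologicalSpace X] {c H t : X → ℝ}
    (hv : Continuous v) (hc : Continuous c) (hH : Continuous H) (ht : Continuous t) :
    Continuous fun q => negLogDensity v (c q) (H q) (t q) :=
  continuous_fluxEnergyIso_symm.comp (f := fun q => (c q, H q - v (t q)))
    (hc.prodMk (hH.sub (hv.comp ht)))

lemma continuous_cellMass {X : Type*} [TopologicalSpace X] {c H : X → ℝ} (hv : Continuous v)
    (hc : Continuous c) (hH : Continuous H) : Continuous fun q => cellMass v (c q) (H q) :=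
  intervalIntegral.continuous_parametric_intervalIntegral_of_continuous' (by fun_prop) 0 1

lemma strictAnti_cellMass (hv : Continuous v) (c : ℝ) : StrictAnti (cellMass v c) := by
  intro H H' hlt
  have hcont (H : ℝ) : Continuous fun t => Real.exp (-negLogDensity v c H t) := by fun_prop
  refine intervalIntegral.integral_lt_integral_of_continuousOn_of_le_of_exists_lt zero_lt_one
    (hcont _).continuousOn (hcont _).continuousOn (fun t _ => ?_) ⟨0, by simp, ?_⟩
  · exact Real.exp_le_exp.2 (neg_le_neg (negLogDensity_mono (by linarith)))
  · exact Real.exp_lt_exp.2 (neg_lt_neg ((fluxEnergyIso c).symm.strictMono (by linarith)))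

lemma negLogDensity_eq_zero (v : ℝ → ℝ) (c t : ℝ) :
    negLogDensity v c (c ^ 2 / 2 + v t) t = 0 := by
  simpa using abs_le_of_fluxEnergy_eq (s := 0)
    ((fluxEnergy_negLogDensity v c (c ^ 2 / 2 + v t) t).trans (by ring))

lemma exists_cellMass_eq_one (hv : Continuous v) (hM : ∀ t, |v t| ≤ M) (c : ℝ) :
    ∃ H, |H - c ^ 2 / 2| ≤ M ∧ cellMass v c H = 1 := by
  have hbound (t : ℝ) := abs_le.1 (hM t)
  have hint (H : ℝ) : IntervalIntegrable (fun t => Real.exp (-negLogDensity v c H t)) volume 0 1 :=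
    Continuous.intervalIntegrable (by fun_prop) _ _
  have hone : ∫ _ in (0 : ℝ)..1, (1 : ℝ) = 1 := by simp
  have hlow : 1 ≤ cellMass v c (c ^ 2 / 2 - M) := by
    refine hone.symm.trans_le
      (intervalIntegral.integral_mono zero_le_one (by simp) (hint _) fun t => ?_)
    refine Real.one_le_exp (neg_nonneg.2 ?_)
    rw [← negLogDensity_eq_zero v c t]
    exact negLogDensity_mono (by linarith [hbound t])
  have hhigh : cellMass v c (c ^ 2 / 2 + M) ≤ 1 := by
    refine (intervalIntegral.integral_mono zero_le_one (hint _) (by simp) fun t => ?_).trans_eq hone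
    refine Real.exp_le_one_iff.2 (neg_nonpos.2 ?_)
    rw [← negLogDensity_eq_zero v c t]
    exact negLogDensity_mono (by linarith [hbound t])
  obtain ⟨H, hH, hmass⟩ := intermediate_value_Icc' (by linarith [hbound 0])
    (continuous_cellMass hv continuous_const continuous_id).continuousOn ⟨hhigh, hlow⟩
  refine ⟨H, ?_, hmass⟩
  rw [abs_le]
  constructor <;> linarith [hH.1, hH.2]

/-- A solution of the cell problem on `ℝ / ℤ` with potential `v`, in terms of its constant flux `c`
and of the negative logarithm `r` of its density. -/
structure IsCircleCellSol (v : ℝ → ℝ) (Λ c H : ℝ) (r : ℝ → ℝ) : Prop where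
  contDiff : ContDiff ℝ 1 r
  periodic : Periodic r 1
  fluxEnergy_eq : ∀ t, fluxEnergy c (r t) = H - v t
  integral_density : ∫ t in (0 : ℝ)..1, Real.exp (-r t) = 1
  integral_velocity : ∫ t in (0 : ℝ)..1, c * Real.exp (r t) = Λ

lemma exists_mul_integral_eq {f : ℝ → ℝ → ℝ} (hf : Continuous (uncurry f)) {ε : ℝ} (hε : 0 < ε)
    (hle : ∀ c t, ε ≤ f c t) (Λ : ℝ) : ∃ c, c * ∫ t in (0 : ℝ)..1, f c t = Λ := by
  have hint (c : ℝ) : ε ≤ ∫ t in (0 : ℝ)..1, f c t := by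
    simpa using intervalIntegral.integral_mono zero_le_one
      (intervalIntegrable_const (μ := volume) (c := ε))
      ((hf.comp (Continuous.prodMk_right c)).intervalIntegrable 0 1) (hle c)
  have hcont : Continuous fun c => c * ∫ t in (0 : ℝ)..1, f c t :=
    continuous_id.mul
      (intervalIntegral.continuous_parametric_intervalIntegral_of_continuous' hf 0 1)
  refine mem_range_of_exists_le_of_exists_ge hcont ⟨-|Λ| / ε, ?_⟩ ⟨|Λ| / ε, ?_⟩
  · calc -|Λ| / ε * ∫ t in (0 : ℝ)..1, f _ t ≤ -|Λ| / ε * ε :=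
          mul_le_mul_of_nonpos_left (hint _) (div_nonpos_of_nonpos_of_nonneg (by simp) hε.le)
      _ = -|Λ| := div_mul_cancel₀ _ hε.ne'
      _ ≤ Λ := neg_abs_le Λ
  · calc Λ ≤ |Λ| := le_abs_self Λ
      _ = |Λ| / ε * ε := (div_mul_cancel₀ _ hε.ne').symm
      _ ≤ |Λ| / ε * ∫ t in (0 : ℝ)..1, f _ t := by gcongr; exact hint _

lemma exists_isCircleCellSol (hv : ContDiff ℝ 1 v) (hper : Periodic v 1) (hM : ∀ t, |v t| ≤ M)
    (Λ : ℝ) : ∃ c H r, IsCircleCellSol v Λ c H r ∧ (∀ t, |r t| ≤ 2 * M) ∧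
      ∀ t, (c * Real.exp (r t) - c) ^ 2 ≤ 4 * M := by
  have hvc := hv.continuous
  choose H hH hmass using exists_cellMass_eq_one hvc hM
  have hHcont : Continuous H :=
    continuous_of_strictMono_of_apply_eq (K := fun c a => -cellMass v c a) (g := fun _ => -1)
      (fun a => (continuous_cellMass hvc continuous_id continuous_const).neg)
      (fun c => (strictAnti_cellMass hvc c).neg) continuous_const fun c => by rw [hmass]
  have hflux (c t : ℝ) :
      fluxEnergy c (negLogDensity v c (H c) t) = c ^ 2 / 2 + (H c - c ^ 2 / 2 - v t) := by
    rw [fluxEnergy_negLogDensity]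
    ring
  have hosc (c t : ℝ) : |H c - c ^ 2 / 2 - v t| ≤ 2 * M := by
    linarith [abs_sub (H c - c ^ 2 / 2) (v t), hH c, hM t]
  have hr (c t : ℝ) : |negLogDensity v c (H c) t| ≤ 2 * M :=
    (abs_le_of_fluxEnergy_eq (hflux c t)).trans (hosc c t)
  obtain ⟨c, hc⟩ := exists_mul_integral_eq (f := fun c t => Real.exp (negLogDensity v c (H c) t))
    (by simp only [uncurry_def]; fun_prop) (Real.exp_pos (-(2 * M)))
    (fun c t => Real.exp_le_exp.2 (abs_le.1 (hr c t)).1) Λ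
  refine ⟨c, H c, negLogDensity v c (H c), ⟨?_, ?_, fluxEnergy_negLogDensity v c (H c), hmass c,
    ?_⟩, hr c, fun t => ?_⟩
  · exact (contDiff_fluxEnergyIso_symm c).comp (contDiff_const.sub hv)
  · intro t
    simp only [negLogDensity, hper t]
  · rw [intervalIntegral.integral_const_mul, hc]
  · linarith [sq_mul_exp_sub_le_of_fluxEnergy_eq (hflux c t), hosc c t]

lemma exists_periodic_primitive {p : ℝ → ℝ} {T : ℝ} (hp : ContDiff ℝ 1 p) (hper : Periodic p T)
    (hint : ∫ t in (0 : ℝ)..T, p t = 0) :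
    ∃ W : ℝ → ℝ, ContDiff ℝ 2 W ∧ Periodic W T ∧ ∀ t, HasDerivAt W (p t) t := by
  have hW (t : ℝ) : HasDerivAt (fun t => ∫ s in (0 : ℝ)..t, p s) (p t) t :=
    (hp.continuous.integral_hasStrictDerivAt 0 t).hasDerivAt
  refine ⟨fun t => ∫ s in (0 : ℝ)..t, p s, ?_, fun t => ?_, hW⟩
  · rw [show (2 : WithTop ℕ∞) = 1 + 1 by norm_num, contDiff_succ_iff_deriv]
    refine ⟨fun t => (hW t).differentiableAt, by simp, ?_⟩
    rwa [show deriv _ = p from funext fun t => (hW t).deriv]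
  · have hadd := hper.intervalIntegral_add_eq_add 0 t
      fun _ _ => hp.continuous.intervalIntegrable _ _
    rwa [zero_add, hint, add_zero] at hadd

end OneDimensional

section Separable

variable {d : ℕ} {V : (Fin d → ℝ) → (Fin d → ℝ) → ℝ} {x Λ : Fin d → ℝ}

lemma zper_sum_comp_apply {W : Fin d → ℝ → ℝ} (hW : ∀ i, Periodic (W i) 1) :
    ZPer fun y => ∑ i, W i (y i) :=
  fun y k => Finset.sum_congr rfl fun i _ => by simpa using (hW i).int_mul (k i) (y i)

lemma exp_neg_sum_mul_exp_congr (r : Fin d → ℝ → ℝ) {i : Fin d} {y z : Fin d → ℝ}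
    (hyz : ∀ j ≠ i, y j = z j) :
    Real.exp (-∑ j, r j (y j)) * Real.exp (r i (y i)) =
      Real.exp (-∑ j, r j (z j)) * Real.exp (r i (z i)) := by
  have herase : ∑ j ∈ Finset.univ.erase i, r j (y j) = ∑ j ∈ Finset.univ.erase i, r j (z j) :=
    Finset.sum_congr rfl fun j hj => by rw [hyz j (Finset.ne_of_mem_erase hj)]
  rw [← Real.exp_add, ← Real.exp_add, ← Finset.add_sum_erase _ _ (Finset.mem_univ i),
    ← Finset.add_sum_erase _ (fun j => r j (z j)) (Finset.mem_univ i), herase]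
  ring_nf

lemma exists_cellSolAt_of_isCircleCellSol {v r : Fin d → ℝ → ℝ} {c Hs : Fin d → ℝ} {a : ℝ}
    (hV : ∀ y, V x y = a + ∑ i, v i (y i))
    (h : ∀ i, IsCircleCellSol (v i) (Λ i) (c i) (Hs i) (r i)) :
    ∃ w, CellSolAt V x Λ w (fun y => Real.exp (-∑ i, r i (y i))) (a + ∑ i, Hs i) ∧
      ∀ i y, velocity Λ w i y = c i * Real.exp (r i (y i)) := by
  have hr (i : Fin d) := (h i).contDiff
  have hprimitive (i : Fin d) := exists_periodic_primitive
    (p := fun t => c i * Real.exp (r i t) - Λ i) (T := 1) (by fun_prop)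
    (fun t => by simp only [(h i).periodic t]) <| by
      have hcont : Continuous fun t => c i * Real.exp (r i t) := by fun_prop
      rw [intervalIntegral.integral_sub (hcont.intervalIntegrable _ _) (by simp),
        (h i).integral_velocity]
      simp
  choose W hW hWper hWderiv using hprimitive
  have hvel (i : Fin d) (y : Fin d → ℝ) :
      Λ i + pder i (fun y => ∑ j, W j (y j)) y = c i * Real.exp (r i (y i)) := by
    rw [pder_sum_comp_apply hWderiv, add_sub_cancel]
  refine ⟨fun y => ∑ i, W i (y i), ⟨by fun_prop, zper_sum_comp_apply hWper, by fun_prop,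
    fun y k => ?_, fun y => Real.exp_pos _, fun y => ?_, fun y => ?_, ?_⟩, hvel⟩
  · exact congrArg (fun s => Real.exp (-s)) (zper_sum_comp_apply (fun i => (h i).periodic) y k)
  · have hsq (i : Fin d) : (c i * Real.exp (r i (y i))) ^ 2 =
        2 * (Hs i - v i (y i) - r i (y i)) := by
      rw [← (h i).fluxEnergy_eq, fluxEnergy_eq_add_sq]
      ring
    simp only [hvel, hsq, hV, Real.log_exp, ← Finset.mul_sum, Finset.sum_sub_distrib]
    ring
  · simp only [hvel]
    refine Finset.sum_eq_zero fun i _ => pder_eq_zero_of_forall_add_single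
      (ContDiff.differentiable (n := 1) (by fun_prop) one_ne_zero) (fun y t => ?_) y
    rw [mul_left_comm, mul_left_comm _ (c i), exp_neg_sum_mul_exp_congr r fun j hj => ?_]
    simp [hj]
  · simp only [← Finset.sum_neg_distrib, Real.exp_sum,
      integral_cube_prod fun i t => Real.exp (-r i t), (h _).integral_density,
      Finset.prod_const_one]

lemma eq_add_sum_single_sub {f : (Fin d → ℝ) → ℝ}
    (hf : 1 < d → ∃ v : Fin d → ℝ → ℝ, ∀ y, f y = ∑ i, v i (y i)) (y : Fin d → ℝ) :
    f y = f 0 + ∑ i, (f (Pi.single i (y i)) - f 0) := by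
  obtain hd | hd := lt_or_ge 1 d
  · obtain ⟨v, hv⟩ := hf hd
    have hsingle (i : Fin d) : f (Pi.single i (y i)) - f 0 = v i (y i) - v i 0 := by
      rw [hv, hv, ← Finset.sum_sub_distrib, Finset.sum_eq_single i] <;> simp +contextual
    simp only [hsingle, Finset.sum_sub_distrib]
    rw [hv y, hv 0]
    simp
  · have : Subsingleton (Fin d) := Fin.subsingleton_iff_le_one.2 hd
    obtain _ | ⟨⟨i⟩⟩ := isEmpty_or_nonempty (Fin d)
    · simp [Subsingleton.elim y 0]
    · have hy : Pi.single i (y i) = y := funext fun j => by simp [Subsingleton.elim j i]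
      simp [Fintype.sum_subsingleton _ i, hy]

lemma exists_cellSolAt_of_separable (hV : ContDiff ℝ 1 (V x)) (hper : ZPer (V x)) {B : ℝ}
    (hB : ∀ y, |V x y| ≤ B)
    (hsep : 1 < d → ∃ v : Fin d → ℝ → ℝ, ∀ y, V x y = ∑ i, v i (y i)) (Λ : Fin d → ℝ) :
    ∃ (w m : (Fin d → ℝ) → ℝ) (H : ℝ) (c : Fin d → ℝ), CellSolAt V x Λ w m H ∧
      (∀ y, Real.exp (-(4 * d * B)) ≤ m y) ∧ ∀ y i, (velocity Λ w i y - c i) ^ 2 ≤ 8 * B := by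
  set v : Fin d → ℝ → ℝ := fun i t => V x (Pi.single i t) - V x 0
  have hv (i : Fin d) : ContDiff ℝ 1 (v i) :=
    (hV.comp (ContinuousLinearMap.single ℝ (fun _ : Fin d => ℝ) i).contDiff).sub contDiff_const
  have hvper (i : Fin d) : Periodic (v i) 1 := fun t => by
    simpa [v, Pi.single] using hper.update_add_one (Pi.single i t) i
  have hvB (i : Fin d) (t : ℝ) : |v i t| ≤ 2 * B := by
    linarith [abs_sub (V x (Pi.single i t)) (V x 0), hB (Pi.single i t), hB 0]
  choose c H r hsol hr hosc using fun i => exists_isCircleCellSol (hv i) (hvper i) (hvB i) (Λ i)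
  obtain ⟨w, hw, hvel⟩ := exists_cellSolAt_of_isCircleCellSol (eq_add_sum_single_sub hsep) hsol
  refine ⟨w, _, _, c, hw, fun y => ?_, fun y i => ?_⟩
  · have hsum : ∑ i, r i (y i) ≤ d * (2 * (2 * B)) :=
      (Finset.sum_le_card_nsmul _ _ _ fun i _ => (abs_le.1 (hr i (y i))).2).trans_eq (by simp)
    rw [Real.exp_le_exp]
    linarith
  · rw [hvel]
    linarith [hosc i (y i)]

end Separable

section Hamiltonian

variable {d : ℕ} {V : (Fin d → ℝ) → (Fin d → ℝ) → ℝ}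

lemma fderiv_fderiv_effectiveHamiltonian_mem_Icc {x : Fin d → ℝ} {B : ℝ}
    (hB : ∀ y, |V x y| ≤ B)
    (hsep : 1 < d → ∃ v : Fin d → ℝ → ℝ, ∀ y, V x y = ∑ i, v i (y i))
    {w m : (Fin d → ℝ) → (Fin d → ℝ) → ℝ} {H : (Fin d → ℝ) → ℝ}
    (hsol : ∀ Λ, CellSolAt V x Λ (w Λ) (m Λ) (H Λ)) (hH : ContDiff ℝ 2 H) (Λ ξ : Fin d → ℝ) :
    fderiv ℝ (fderiv ℝ H) Λ ξ ξ ∈ Set.Icc (Real.exp (-(4 * d * B)) * ∑ i, ξ i ^ 2)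
      ((1 + 8 * d * B) * ∑ i, ξ i ^ 2) := by
  obtain ⟨w₀, m₀, H₀, c, h₀, hm₀, hosc⟩ := exists_cellSolAt_of_separable
    (hsol 0).contDiff_potential (hsol 0).zper_potential hB hsep Λ
  obtain rfl := h₀.effectiveHamiltonian_unique (hsol Λ)
  set l := ∑ i, meanVelocity Λ w₀ m₀ i * ξ i with hl
  have hlin (t : ℝ) : ∑ i, meanVelocity Λ w₀ m₀ i * (t • ξ) i = l * t := by
    simp only [Pi.smul_apply, smul_eq_mul, hl, Finset.sum_mul]
    exact Finset.sum_congr rfl fun i _ => by ring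
  have hsq (t : ℝ) : ∑ i, (t • ξ) i ^ 2 = t ^ 2 * ∑ i, ξ i ^ 2 := by
    simp only [Pi.smul_apply, smul_eq_mul, mul_pow, Finset.mul_sum]
  set S := ∑ i, ξ i ^ 2
  constructor
  · calc Real.exp (-(4 * d * B)) * S = 2 * (Real.exp (-(4 * d * B)) / 2 * S) := by ring
      _ ≤ fderiv ℝ (fderiv ℝ H) Λ ξ ξ :=
          two_mul_le_fderiv_fderiv (l := l) hH <| .of_forall fun t => by
            have := h₀.add_quadratic_le_effectiveHamiltonian (hsol (Λ + t • ξ))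
              (Real.exp_pos _).le hm₀
            rw [hlin, hsq] at this
            linarith
  · calc fderiv ℝ (fderiv ℝ H) Λ ξ ξ ≤ 2 * ((1 + 8 * d * B) / 2 * S) :=
          fderiv_fderiv_le_two_mul (l := l) hH <| .of_forall fun t => by
            have := h₀.effectiveHamiltonian_le_add_quadratic (hsol (Λ + t • ξ)) hosc
            rw [hlin, hsq] at this
            linarith
      _ = (1 + 8 * d * B) * S := by ring

theorem stmt18_general {B : ℝ} (hB : ∀ x y, |V x y| ≤ B)
    (hsep : 1 < d → ∀ x, ∃ v : Fin d → ℝ → ℝ, ∀ y, V x y = ∑ i, v i (y i))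
    {w m : (Fin d → ℝ) → (Fin d → ℝ) → (Fin d → ℝ) → ℝ} {H : (Fin d → ℝ) → (Fin d → ℝ) → ℝ}
    (hsol : ∀ x Λ, CellSolAt V x Λ (w x Λ) (m x Λ) (H x Λ)) (hH : ∀ x, ContDiff ℝ 2 (H x)) :
    (∃ C > 0, ∀ (x Λ ξ : Fin d → ℝ),
      C * (∑ j, (ξ j) ^ 2) ≤
        ∑ j, ∑ l, ξ j * pder l (fun Λ' => pder j (fun Λ'' => H x Λ'') Λ') Λ * ξ l) ∧
    (∃ C' > 0, ∀ (x Λ : Fin d → ℝ) (j l : Fin d),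
      |pder l (fun Λ' => pder j (fun Λ'' => H x Λ'') Λ') Λ| ≤ C') := by
  have hB₀ : 0 ≤ B := (abs_nonneg _).trans (hB 0 0)
  have hess (x Λ ξ : Fin d → ℝ) := fderiv_fderiv_effectiveHamiltonian_mem_Icc (hB x)
    (fun hd => hsep hd x) (hsol x) (hH x) Λ ξ
  refine ⟨⟨Real.exp (-(4 * d * B)), Real.exp_pos _, fun x Λ ξ => ?_⟩,
    ⟨1 + 8 * d * B, by positivity, fun x Λ j l => ?_⟩⟩
  · exact (hess x Λ ξ).1.trans_eq (sum_mul_pder_pder_mul (hH x) Λ ξ).symm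
  · exact abs_pder_pder_le (hH x) (fun ξ => le_trans (by positivity) (hess x Λ ξ).1)
      (fun ξ => (hess x Λ ξ).2) j l

end Hamiltonian

/-- uniform convexity of `H̃` in `Λ` (`ξᵀ D²_Λ H̃ ξ ≥ C|ξ|²`) and uniform
boundedness of the second `Λ`-derivatives, for cell-problem solutions depending smoothly
on `(x,Λ)`; for `d > 1`, `V` is assumed separable in `y`. -/
theorem stmt18 {d : ℕ} (V : (Fin d → ℝ) → (Fin d → ℝ) → ℝ) (hV : SmoothV V)
    (hsep : 1 < d → SeparableV V)
    (w m : (Fin d → ℝ) → (Fin d → ℝ) → (Fin d → ℝ) → ℝ)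
    (H : (Fin d → ℝ) → (Fin d → ℝ) → ℝ)
    (hsol : ∀ x Λ, CellSolAt V x Λ (w x Λ) (m x Λ) (H x Λ))
    (hws : ∀ y, ContDiff ℝ (⊤ : ℕ∞) fun q : (Fin d → ℝ) × (Fin d → ℝ) => w q.1 q.2 y)
    (hms : ∀ y, ContDiff ℝ (⊤ : ℕ∞) fun q : (Fin d → ℝ) × (Fin d → ℝ) => m q.1 q.2 y)
    (hHs : ContDiff ℝ (⊤ : ℕ∞) (uncurry H)) :
    (∃ C > 0, ∀ (x Λ ξ : Fin d → ℝ),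
      C * (∑ j, (ξ j) ^ 2) ≤
        ∑ j, ∑ l, ξ j * pder l (fun Λ' => pder j (fun Λ'' => H x Λ'') Λ') Λ * ξ l) ∧
    (∃ C' > 0, ∀ (x Λ : Fin d → ℝ) (j l : Fin d),
      |pder l (fun Λ' => pder j (fun Λ'' => H x Λ'') Λ') Λ| ≤ C') := by
  exact stmt18_general hV.exists_abs_le.choose_spec
    (fun hd x => let ⟨v, _, _, hv⟩ := hsep hd; ⟨fun i => v i x, hv x⟩) hsol
    fun x => contDiff_infty.1 (hHs.comp (contDiff_prodMk_right x)) 2
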